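/- For every n ≥ 4, all real numbers y_1, …, y_n, and every integer 1 ≤ k ≤ n−3, one has |s_n(y)|^(1/n) ≤ max_{k' ∈ {k, k+1}} (2n)^((1/2)·log((n−1)/(n−k'−1))) · |s_{n−k'}(y)|^(1/(n−k')), where log denotes the natural logarithm. -/

import Mathlib

open Finset Real

/-- The non-normalized elementary symmetric function `S_m(y)`. -/
noncomputable def esymmS (n m : ℕ) (y : Fin n → ℝ) : ℝ :=
  ∑ A ∈ powersetCard m (univ : Finset (Fin n)), ∏ i ∈ A, y i

/-- The elementary symmetric mean `s_m(y) = S_m(y) / binom(n,m)`. -/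
noncomputable def smean (n m : ℕ) (y : Fin n → ℝ) : ℝ :=
  esymmS n m y / (n.choose m)

/-!
By Rolle's theorem, `∏ (X - y_i)` and its derivative, suitably normalised, have the same
elementary symmetric means up to the degree of the derivative; so a statement about `s_0, …, s_m`
may be proved for `n = m`. In that case, assume that no `y_i` vanishes, and let
`g = |s_n(y)|^(1/n)`. The inequality between the geometric and the arithmetic mean of the squares
`x_i²`, where `x_i = 1 / y_i`, gives
`g⁻² ≤ n s_1(x)² - (n - 1) s_2(x)`, hence `g⁻ʲ ≤ (2n)^(j/2) |s_j(x)|` for `j = 1` or `j = 2`. As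
`s_j(x) = s_{n-j}(y) / s_n(y)`, this reads `g^(n-j) ≤ (2n)^(j/2) |s_{n-j}(y)|`. Taking roots costs
the factor `(2n)^(j / (2 (n - j)))`, and `j / (n - j) ≤ log ((n - 1) / (n - j - 1))` for `j ≤ 2`.
These logarithms telescope: after discounting `|s_m(y)|^(1/m)` by `(2n)^(½ log (m - 1))`, each term
is at most the larger of the preceding two.
-/

theorem le_max_of_forall_add_two_le_max {α : Type*} [LinearOrder α] {f : ℕ → α} {m n : ℕ}
    (hmn : m ≤ n) (hf : ∀ j, m ≤ j → j + 2 ≤ n → f (j + 2) ≤ max (f (j + 1)) (f j)) :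
    f n ≤ max (f (m + 1)) (f m) := by
  induction n using Nat.strong_induction_on with
  | _ n ih =>
    obtain rfl | rfl | ⟨j, rfl, hmj⟩ : n = m ∨ n = m + 1 ∨ ∃ j, n = j + 2 ∧ m ≤ j := by
      by_cases h : m + 2 ≤ n
      · exact .inr (.inr ⟨n - 2, by omega, by omega⟩)
      · omega
    · exact le_max_right _ _
    · exact le_max_left _ _
    · exact (hf j hmj le_rfl).trans <| max_le
        (ih (j + 1) (by omega) (by omega) fun i hi hij ↦ hf i hi (by omega))
        (ih j (by omega) hmj fun i hi hij ↦ hf i hi (by omega))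

theorem exists_map_univ_val_eq {α : Type*} {n : ℕ} {s : Multiset α} (hs : s.card = n) :
    ∃ z : Fin n → α, univ.val.map z = s := by
  subst hs
  induction s using Quotient.inductionOn with
  | h l => exact ⟨l.get, (Fin.univ_val_map _).trans (congrArg _ (List.ofFn_get l))⟩

theorem div_le_log_div {a j : ℝ} (hj₀ : 0 ≤ j) (hj₂ : j ≤ 2) (hja : j + 1 < a) :
    j / (a - j) ≤ log ((a - 1) / (a - j - 1)) := by
  have hpos : 0 < a - j - 1 := by linarith
  calc j / (a - j) ≤ 2 * j / (j + 2 * (a - j - 1)) := by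
        rw [div_le_div_iff₀ (by linarith) (by positivity)]
        nlinarith
    _ = 2 * (j / (a - j - 1)) / (j / (a - j - 1) + 2) := by field_simp
    _ ≤ log (1 + j / (a - j - 1)) := le_log_one_add_of_nonneg (div_nonneg hj₀ hpos.le)
    _ = log ((a - 1) / (a - j - 1)) := by
        rw [one_add_div hpos.ne']
        ring_nf

theorem le_rpow_div_mul_rpow_one_div {g M s : ℝ} {m : ℕ} (hg : 0 ≤ g) (hM : 0 ≤ M) (hs : 0 ≤ s)
    (hm : m ≠ 0) {c : ℝ} (h : g ^ m ≤ M ^ c * s) : g ≤ M ^ (c / m) * s ^ ((1 : ℝ) / m) := by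
  calc g = (g ^ m) ^ ((1 : ℝ) / m) := by rw [one_div, pow_rpow_inv_natCast hg hm]
    _ ≤ (M ^ c * s) ^ ((1 : ℝ) / m) := by gcongr
    _ = M ^ (c / m) * s ^ ((1 : ℝ) / m) := by
      rw [mul_rpow (rpow_nonneg hM _) hs, ← rpow_mul hM, mul_one_div]

/-- The root `|s_m(y)|^(1/m)`, which makes the means of different orders `m` comparable. -/
noncomputable def smeanRoot (n m : ℕ) (y : Fin n → ℝ) : ℝ :=
  |smean n m y| ^ ((1 : ℝ) / m)

/-- The root `|s_m(y)|^(1/m)` discounted by `M^(½ log (m - 1))`. It is meant for `2 ≤ m`, where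
the quotient of the discounts at orders `a` and `b` is `M^(½ log ((a - 1) / (b - 1)))`; the theorem
has `M = 2n`. -/
noncomputable def discountedRoot (M : ℝ) (n : ℕ) (y : Fin n → ℝ) (m : ℕ) : ℝ :=
  smeanRoot n m y / M ^ ((1 / 2 : ℝ) * log ((m : ℝ) - 1))

section Smean

variable {n m : ℕ} (y : Fin n → ℝ)

theorem esymmS_eq_multiset_esymm : esymmS n m y = (univ.val.map y).esymm m :=
  (esymm_map_val y univ m).symm

theorem aeval_esymm_eq_esymmS :
    MvPolynomial.aeval y (MvPolynomial.esymm (Fin n) ℝ m) = esymmS n m y := by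
  rw [MvPolynomial.aeval_esymm_eq_multiset_esymm, esymmS_eq_multiset_esymm]

theorem choose_mul_smean : (n.choose m : ℝ) * smean n m y = esymmS n m y := by
  rcases le_or_gt m n with hmn | hnm
  · have : (n.choose m : ℝ) ≠ 0 := by exact_mod_cast (Nat.choose_pos hmn).ne'
    rw [smean, mul_div_cancel₀ _ this]
  · have : powersetCard m (univ : Finset (Fin n)) = ∅ := powersetCard_eq_empty.2 (by simpa)
    simp [esymmS, this, Nat.choose_eq_zero_of_lt hnm]

theorem smean_self : smean n n y = ∏ i, y i := by
  have : powersetCard n (univ : Finset (Fin n)) = {univ} := by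
    simpa using powersetCard_self (univ : Finset (Fin n))
  simp [smean, esymmS, this]

variable {y}

theorem esymmS_sub_eq_prod_mul_esymmS_inv (hmn : m ≤ n) (hy : ∀ i, y i ≠ 0) :
    esymmS n (n - m) y = (∏ i, y i) * esymmS n m y⁻¹ := by
  rw [esymmS, esymmS, mul_sum]
  refine sum_nbij' compl compl ?_ ?_ (by simp) (by simp) fun A _ ↦ ?_
  · simp only [mem_powersetCard_univ, card_compl, Fintype.card_fin]
    omega
  · simp only [mem_powersetCard_univ, card_compl, Fintype.card_fin]
    omega
  · have hA : ∏ i ∈ Aᶜ, y i ≠ 0 := prod_ne_zero_iff.2 fun i _ ↦ hy i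
    simp only [Pi.inv_apply, prod_inv_distrib]
    rw [← prod_mul_prod_compl A y, mul_inv_cancel_right₀ hA]

theorem smean_sub_eq_smean_self_mul_smean_inv (hmn : m ≤ n) (hy : ∀ i, y i ≠ 0) :
    smean n (n - m) y = smean n n y * smean n m y⁻¹ := by
  rw [smean_self, smean, smean, esymmS_sub_eq_prod_mul_esymmS_inv hmn hy, Nat.choose_symm hmn,
    mul_div_assoc]

end Smean

section Rolle

open Polynomial

theorem splits_derivative_of_splits {p : ℝ[X]} (hp : p.Splits) : p.derivative.Splits := by
  rw [splits_iff_card_roots] at hp ⊢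
  have hRolle := card_roots_le_derivative p
  have hdegree := p.derivative.card_roots'
  rw [natDegree_derivative] at hdegree ⊢
  omega

theorem exists_eq_C_mul_prod_X_sub_C_of_splits {R : Type*} [CommRing R] [IsDomain R] {n : ℕ}
    {p : R[X]} (hp : p.Splits) (hn : p.natDegree = n) :
    ∃ z : Fin n → R, p = C p.leadingCoeff * ∏ i, (X - C (z i)) := by
  obtain ⟨z, hz⟩ := exists_map_univ_val_eq (hp.natDegree_eq_card_roots.symm.trans hn)
  refine ⟨z, hp.eq_prod_roots.trans ?_⟩
  rw [← hz, Multiset.map_map]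
  rfl

theorem coeff_prod_X_sub_C_eq_smean {n j : ℕ} (hj : j ≤ n) (y : Fin n → ℝ) :
    (∏ i, (X - C (y i))).coeff (n - j) = (-1) ^ j * (n.choose j * smean n j y) := by
  have hcard : (univ.val.map y).card = n := by simp
  have hcoeff := Multiset.prod_X_sub_C_coeff (univ.val.map y) (k := n - j) (by omega)
  rwa [hcard, Nat.sub_sub_self hj, Multiset.map_map, ← esymmS_eq_multiset_esymm,
    ← choose_mul_smean] at hcoeff

theorem exists_derivative_prod_X_sub_C_eq {n : ℕ} (y : Fin (n + 1) → ℝ) :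
    ∃ z : Fin n → ℝ,
      derivative (∏ i, (X - C (y i))) = C ((n : ℝ) + 1) * ∏ i, (X - C (z i)) := by
  set p : ℝ[X] := ∏ i, (X - C (y i)) with hp
  have hsplits : p.Splits := .prod fun i _ ↦ .X_sub_C (y i)
  have hdegree : p.natDegree = n + 1 := by simp [hp]
  have hmonic : p.Monic := monic_prod_X_sub_C y univ
  have hlead : p.derivative.leadingCoeff = n + 1 := by
    simp [leadingCoeff_derivative, hmonic.leadingCoeff, hdegree]
  rw [← hlead]
  exact exists_eq_C_mul_prod_X_sub_C_of_splits (splits_derivative_of_splits hsplits)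
    (by rw [natDegree_derivative, hdegree, Nat.add_sub_cancel])

theorem exists_smean_eq_smean_succ {n : ℕ} (y : Fin (n + 1) → ℝ) :
    ∃ z : Fin n → ℝ, ∀ j ≤ n, smean n j z = smean (n + 1) j y := by
  obtain ⟨z, hz⟩ := exists_derivative_prod_X_sub_C_eq y
  refine ⟨z, fun j hj ↦ ?_⟩
  have hcoeff := congrArg (coeff · (n - j)) hz
  simp only [coeff_derivative, coeff_C_mul] at hcoeff
  rw [coeff_prod_X_sub_C_eq_smean hj, ← Nat.sub_add_comm hj,
    coeff_prod_X_sub_C_eq_smean (by omega), Nat.cast_sub hj] at hcoeff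
  have hchoose : ((n + 1).choose j : ℝ) * (n - j + 1) = n.choose j * (n + 1) := by
    have := congrArg (Nat.cast (R := ℝ)) (Nat.choose_mul_succ_eq n j)
    push_cast [Nat.cast_sub (show j ≤ n + 1 by omega)] at this
    linear_combination -this
  have hne : (-1 : ℝ) ^ j * (n.choose j * (n + 1)) ≠ 0 := by
    have := Nat.choose_pos hj
    positivity
  apply mul_left_cancel₀ hne
  linear_combination (-1) ^ j * smean (n + 1) j y * hchoose - hcoeff

theorem exists_smean_eq_smean_of_le {m n : ℕ} (hmn : m ≤ n) (y : Fin n → ℝ) :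
    ∃ z : Fin m → ℝ, ∀ j ≤ m, smean m j z = smean n j y := by
  induction n, hmn using Nat.le_induction with
  | base => exact ⟨y, fun _ _ ↦ rfl⟩
  | succ n hmn ih =>
    obtain ⟨w, hw⟩ := exists_smean_eq_smean_succ y
    obtain ⟨z, hz⟩ := ih w
    exact ⟨z, fun j hj ↦ (hz j hj).trans (hw j (hj.trans hmn))⟩

end Rolle

section TopMean

variable {n : ℕ}

theorem smeanRoot_nonneg (m : ℕ) (y : Fin n → ℝ) : 0 ≤ smeanRoot n m y :=
  rpow_nonneg (abs_nonneg _) _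

theorem smeanRoot_pow {m : ℕ} (hm : m ≠ 0) (y : Fin n → ℝ) :
    smeanRoot n m y ^ m = |smean n m y| := by
  rw [smeanRoot, one_div, rpow_inv_natCast_pow (abs_nonneg _) hm]

theorem smeanRoot_self_inv (y : Fin n → ℝ) : smeanRoot n n y⁻¹ = (smeanRoot n n y)⁻¹ := by
  simp only [smeanRoot, smean_self, Pi.inv_apply, prod_inv_distrib, abs_inv]
  exact inv_rpow (abs_nonneg _) _

theorem sum_sq_eq_sq_esymmS_one_sub (x : Fin n → ℝ) :
    ∑ i, x i ^ 2 = esymmS n 1 x ^ 2 - 2 * esymmS n 2 x := by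
  have hNewton := MvPolynomial.psum_eq_mul_esymm_sub_sum (Fin n) ℝ 2 two_pos
  have hpairs : {a ∈ antidiagonal 2 | a.1 ∈ Set.Ioo 0 2} = {(1, 1)} := by decide
  rw [hpairs, sum_singleton, MvPolynomial.psum_one, ← MvPolynomial.esymm_one] at hNewton
  have heval := congrArg (MvPolynomial.aeval x) hNewton
  simp only [MvPolynomial.psum, map_sum, map_sub, map_mul, map_pow, map_neg, map_one, map_natCast,
    MvPolynomial.aeval_X, aeval_esymm_eq_esymmS] at heval
  rw [heval]
  push_cast
  ring

theorem sum_sq_eq_mul_smean_sub (x : Fin n → ℝ) :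
    ∑ i, x i ^ 2 = n * (n * smean n 1 x ^ 2 - (n - 1) * smean n 2 x) := by
  rw [sum_sq_eq_sq_esymmS_one_sub, ← choose_mul_smean, ← choose_mul_smean, Nat.choose_one_right,
    Nat.cast_choose_two]
  ring

theorem sq_smeanRoot_self_le (hn : n ≠ 0) (x : Fin n → ℝ) :
    smeanRoot n n x ^ 2 ≤ n * smean n 1 x ^ 2 - (n - 1) * smean n 2 x := by
  have hn0 : (n : ℝ) ≠ 0 := Nat.cast_ne_zero.2 hn
  have hAMGM := geom_mean_le_arith_mean univ (fun _ ↦ (1 : ℝ)) (fun i ↦ x i ^ 2) (by simp)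
    (by simpa using hn.bot_lt) fun i _ ↦ sq_nonneg _
  simp only [rpow_one, sum_const, card_univ, Fintype.card_fin, nsmul_eq_mul, mul_one, one_mul,
    sum_sq_eq_mul_smean_sub, mul_div_cancel_left₀ _ hn0] at hAMGM
  rwa [smeanRoot, smean_self, rpow_pow_comm (abs_nonneg _), sq_abs, ← prod_pow, one_div]

theorem exists_smeanRoot_self_pow_le (hn : n ≠ 0) (x : Fin n → ℝ) :
    ∃ j ∈ Set.Icc 1 2, smeanRoot n n x ^ j ≤ √(2 * n) ^ j * |smean n j x| := by
  have h2n : (0 : ℝ) ≤ 2 * n := by positivity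
  suffices h : smeanRoot n n x ^ 2 ≤ 2 * n * smean n 1 x ^ 2 ∨
      smeanRoot n n x ^ 2 ≤ 2 * n * |smean n 2 x| by
    rcases h with h | h
    · refine ⟨1, by simp, ?_⟩
      simp only [pow_one]
      apply le_of_sq_le_sq _ (by positivity)
      rwa [mul_pow, sq_sqrt h2n, sq_abs]
    · exact ⟨2, by simp, by rwa [sq_sqrt h2n]⟩
  have hAMGM := sq_smeanRoot_self_le hn x
  have hn1 : (1 : ℝ) ≤ n := by exact_mod_cast Nat.one_le_iff_ne_zero.2 hn
  have h2 : -((n - 1) * smean n 2 x) ≤ n * |smean n 2 x| := by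
    nlinarith [neg_abs_le (smean n 2 x), abs_nonneg (smean n 2 x)]
  by_contra! hlt
  linarith

theorem exists_smeanRoot_self_pow_sub_le (hn : 2 ≤ n) (y : Fin n → ℝ) :
    ∃ j ∈ Set.Icc 1 2, smeanRoot n n y ^ (n - j) ≤ √(2 * n) ^ j * |smean n (n - j) y| := by
  by_cases hy : ∀ i, y i ≠ 0
  · obtain ⟨j, hj, hroot⟩ := exists_smeanRoot_self_pow_le (by omega) y⁻¹
    have hjn : j ≤ n := hj.2.trans hn
    have hpos : 0 < smeanRoot n n y := by
      have : smean n n y ≠ 0 := by simpa [smean_self, prod_ne_zero_iff] using hy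
      exact rpow_pos_of_pos (abs_pos.2 this) _
    refine ⟨j, hj, ?_⟩
    rw [smeanRoot_self_inv] at hroot
    calc smeanRoot n n y ^ (n - j) = smeanRoot n n y ^ n * (smeanRoot n n y)⁻¹ ^ j := by
          rw [inv_pow, pow_sub₀ _ hpos.ne' hjn]
      _ ≤ smeanRoot n n y ^ n * (√(2 * n) ^ j * |smean n j y⁻¹|) := by gcongr
      _ = √(2 * n) ^ j * |smean n (n - j) y| := by
          rw [smeanRoot_pow (by omega), smean_sub_eq_smean_self_mul_smean_inv hjn hy, abs_mul]
          ring
  · push Not at hy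
    obtain ⟨i, hi⟩ := hy
    have hzero : smeanRoot n n y = 0 := by
      rw [smeanRoot, smean_self, prod_eq_zero (mem_univ i) hi, abs_zero, zero_rpow (by positivity)]
    refine ⟨1, by simp, ?_⟩
    rw [hzero, zero_pow (by omega)]
    positivity

end TopMean

section Discount

variable {n : ℕ} {M : ℝ}

theorem discountedRoot_le_discountedRoot_iff {a b : ℕ} (hM : 0 < M) (ha : 1 < a) (hb : 1 < b)
    (y : Fin n → ℝ) :
    discountedRoot M n y a ≤ discountedRoot M n y b ↔
      smeanRoot n a y ≤
        M ^ ((1 / 2 : ℝ) * log (((a : ℝ) - 1) / ((b : ℝ) - 1))) * smeanRoot n b y := by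
  have ha' : (a : ℝ) - 1 ≠ 0 := sub_ne_zero.2 (by exact_mod_cast ha.ne')
  have hb' : (b : ℝ) - 1 ≠ 0 := sub_ne_zero.2 (by exact_mod_cast hb.ne')
  rw [discountedRoot, discountedRoot, div_le_iff₀ (rpow_pos_of_pos hM _), log_div ha' hb', mul_sub,
    rpow_sub hM, div_mul_comm, div_mul_eq_mul_div]

theorem exists_discountedRoot_self_le (hn : 4 ≤ n) (hM : 2 * (n : ℝ) ≤ M) (y : Fin n → ℝ) :
    ∃ j ∈ Set.Icc 1 2, discountedRoot M n y n ≤ discountedRoot M n y (n - j) := by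
  obtain ⟨j, ⟨hj₁, hj₂⟩, hpow⟩ := exists_smeanRoot_self_pow_sub_le (by omega) y
  have hn_cast : (4 : ℝ) ≤ n := by exact_mod_cast hn
  have hj_cast : (j : ℝ) ≤ 2 := by exact_mod_cast hj₂
  have hM₁ : 1 ≤ M := by linarith
  refine ⟨j, ⟨hj₁, hj₂⟩, ?_⟩
  rw [discountedRoot_le_discountedRoot_iff (by linarith) (by omega) (by omega)]
  have hlog := div_le_log_div j.cast_nonneg hj_cast (by linarith : (j : ℝ) + 1 < n)
  have hpowM : smeanRoot n n y ^ (n - j) ≤ M ^ ((j : ℝ) / 2) * |smean n (n - j) y| := by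
    refine hpow.trans ?_
    gcongr
    rw [sqrt_eq_rpow, ← rpow_mul_natCast (by positivity), one_div_mul_eq_div]
    gcongr
  calc smeanRoot n n y ≤ M ^ ((j : ℝ) / 2 / (n - j : ℕ)) * smeanRoot n (n - j) y :=
        le_rpow_div_mul_rpow_one_div (smeanRoot_nonneg n y) (by linarith) (abs_nonneg _) (by omega)
          hpowM
    _ ≤ M ^ ((1 / 2 : ℝ) * log (((n : ℝ) - 1) / (((n - j : ℕ) : ℝ) - 1))) *
          smeanRoot n (n - j) y := by
        gcongr
        · exact smeanRoot_nonneg _ y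
        · rw [Nat.cast_sub (by omega)]
          linarith [div_right_comm (j : ℝ) 2 (n - j)]

theorem discountedRoot_le_max {m : ℕ} (hm : 2 ≤ m) (hmn : m + 2 ≤ n)
    (hM : 2 * ((m + 2 : ℕ) : ℝ) ≤ M) (y : Fin n → ℝ) :
    discountedRoot M n y (m + 2) ≤ max (discountedRoot M n y (m + 1)) (discountedRoot M n y m) := by
  obtain ⟨z, hz⟩ := exists_smean_eq_smean_of_le hmn y
  have hroot : ∀ j ≤ m + 2, discountedRoot M (m + 2) z j = discountedRoot M n y j := fun j hj ↦ by
    rw [discountedRoot, discountedRoot, smeanRoot, smeanRoot, hz j hj]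
  obtain ⟨j, ⟨hj₁, hj₂⟩, hle⟩ := exists_discountedRoot_self_le (by omega) hM z
  rw [hroot _ le_rfl, hroot _ (by omega)] at hle
  interval_cases j
  · exact le_max_of_le_left hle
  · exact le_max_of_le_right hle

end Discount

theorem sn_iterated_bound (n : ℕ) (hn : 4 ≤ n) (y : Fin n → ℝ) (k : ℕ) (hk : 1 ≤ k)
    (hkn : k ≤ n - 3) :
    |smean n n y| ^ ((1 : ℝ) / n) ≤
      max
        ((2 * (n : ℝ)) ^ ((1 / 2 : ℝ) * Real.log (((n : ℝ) - 1) / ((n : ℝ) - k - 1))) *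
          |smean n (n - k) y| ^ ((1 : ℝ) / ((n : ℝ) - k)))
        ((2 * (n : ℝ)) ^ ((1 / 2 : ℝ) * Real.log (((n : ℝ) - 1) / ((n : ℝ) - (k + 1) - 1))) *
          |smean n (n - (k + 1)) y| ^ ((1 : ℝ) / ((n : ℝ) - (k + 1)))) := by
  have hf := fun j (hj : n - (k + 1) ≤ j) (hjn : j + 2 ≤ n) ↦
    discountedRoot_le_max (by omega) hjn (show _ ≤ 2 * (n : ℝ) by gcongr) y
  have h := le_max_of_forall_add_two_le_max (Nat.sub_le n (k + 1)) hf
  have hn₀ : (0 : ℝ) < 2 * n := by positivity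
  rw [show n - (k + 1) + 1 = n - k by omega, le_max_iff,
    discountedRoot_le_discountedRoot_iff hn₀ (by omega) (by omega),
    discountedRoot_le_discountedRoot_iff hn₀ (by omega) (by omega), ← le_max_iff] at h
  simp only [smeanRoot] at h
  push_cast [Nat.cast_sub (show k ≤ n by omega), Nat.cast_sub (show k + 1 ≤ n by omega)] at h
  exact h
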